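/- arXiv:2011.03146 — 2 statements merged into one kernel-verified Lean document; each statement's English description precedes it below -/
import Mathlib

section
/- Let m∈ℕ, m≥2. There exists a constant C>0 depending only on m such that for all f,g,k ∈ C₀^∞(ℝ³;ℝ³), | ∫_{ℝ³} ( ∇^m((f·∇)g) − (f·∇)(∇^m g) ) · ∇^m k dx | ≤ C ( ‖∇^m f‖_{L²}² + ‖∇^m g‖_{L²}² + ‖∇^m k‖_{L²}² ) ( ‖∇f‖_{L^∞} + ‖∇g‖_{L^∞} ). -/
open MeasureTheory Set ENNReal RealInnerProductSpace

noncomputable section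

abbrev E3 : Type := EuclideanSpace ℝ (Fin 3)

/-- The convection term `(f·∇)g`, i.e. the derivative of `g` in direction `f(x)`. -/
def conv (f g : E3 → E3) (x : E3) : E3 := fderiv ℝ g x (f x)

/-- The commutator `[∇^m, f·∇]g = ∇^m((f·∇)g) − (f·∇)(∇^m g)`. -/
def commGrad (m : ℕ) (f g : E3 → E3) (x : E3) :
    ContinuousMultilinearMap ℝ (fun _ : Fin m => E3) E3 :=
  iteratedFDeriv ℝ m (conv f g) x - fderiv ℝ (iteratedFDeriv ℝ m g) x (f x)

/-- The full contraction `A · B` of two `E3`-valued `m`-multilinear tensors on `ℝ³`,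
obtained by summing the inner products of their entries over all multi-indices. -/
def contract (m : ℕ) (A B : ContinuousMultilinearMap ℝ (fun _ : Fin m => E3) E3) : ℝ :=
  ∑ ι : Fin m → Fin 3,
    ⟪A (fun l => EuclideanSpace.single (ι l) 1), B (fun l => EuclideanSpace.single (ι l) 1)⟫

section IntegrationByParts

variable {E F : Type*} [NormedAddCommGroup E] [NormedSpace ℝ E]
  [NormedAddCommGroup F] [NormedSpace ℝ F]

lemma hasDerivAt_abs_rpow_mul_self {q : ℝ} (hq : 0 ≤ q) (t : ℝ) :
    HasDerivAt (fun s : ℝ => |s| ^ q * s) ((q + 1) * |t| ^ q) t := by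
  rcases hq.eq_or_lt with rfl | hq
  · simpa using hasDerivAt_id' t
  rcases lt_trichotomy t 0 with ht | rfl | ht
  · have h := ((hasDerivAt_abs_neg ht).rpow_const (p := q)
      (Or.inl (abs_ne_zero.2 ht.ne))).mul (hasDerivAt_id t)
    refine h.congr_deriv ?_
    rw [Real.rpow_sub_one (abs_ne_zero.2 ht.ne), abs_of_neg ht]
    simp only [id]
    have ht' := ht.ne
    field_simp
  · rw [hasDerivAt_iff_tendsto_slope]
    have h : Filter.Tendsto (fun s : ℝ => |s| ^ q) (nhdsWithin 0 {0}ᶜ) (nhds ((q + 1) * |0| ^ q)) := by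
      have hc : Continuous fun s : ℝ => |s| ^ q := continuous_abs.rpow_const fun _ => Or.inr hq.le
      have := hc.tendsto 0
      simp only [abs_zero, Real.zero_rpow hq.ne', mul_zero] at this ⊢
      exact this.mono_left nhdsWithin_le_nhds
    refine h.congr' ?_
    filter_upwards [self_mem_nhdsWithin] with s hs
    have hs : s ≠ 0 := hs
    simp [slope]
    field_simp
  · have h := ((hasDerivAt_abs_pos ht).rpow_const (p := q)
      (Or.inl (abs_ne_zero.2 ht.ne'))).mul (hasDerivAt_id t)
    refine h.congr_deriv ?_
    rw [Real.rpow_sub_one (abs_ne_zero.2 ht.ne'), abs_of_pos ht]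
    simp only [id]
    field_simp

lemma exists_rpow_norm_le_sum_abs_rpow {W : Type*} [NormedAddCommGroup W] [NormedSpace ℝ W]
    [FiniteDimensional ℝ W] {p : ℝ} (hp : 1 ≤ p) :
    ∃ (d : ℕ) (ℓ : Fin d → W →L[ℝ] ℝ) (C : ℝ), 0 ≤ C ∧
      ∀ w, ‖w‖ ^ p ≤ C * ∑ j, |ℓ j w| ^ p := by
  let b := Module.finBasis ℝ W
  let ℓ : Fin (Module.finrank ℝ W) → W →L[ℝ] ℝ := fun j => LinearMap.toContinuousLinearMap (b.coord j)
  let K := ∑ j, ‖b j‖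
  refine ⟨_, ℓ, K ^ p * (Finset.univ : Finset (Fin (Module.finrank ℝ W))).card ^ (p - 1),
    by positivity, fun w => ?_⟩
  have h1 : ‖w‖ ≤ K * ∑ j, |ℓ j w| := by
    calc ‖w‖ = ‖∑ j, b.repr w j • b j‖ := by rw [b.sum_repr]
      _ ≤ ∑ j, |ℓ j w| * ‖b j‖ := (norm_sum_le _ _).trans (le_of_eq <| by
        simp [norm_smul, ℓ])
      _ ≤ ∑ j, |ℓ j w| * K := by
        gcongr with j
        exact Finset.single_le_sum (f := fun j => ‖b j‖) (fun _ _ => norm_nonneg _)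
          (Finset.mem_univ j)
      _ = _ := by rw [← Finset.sum_mul, mul_comm]
  calc ‖w‖ ^ p ≤ (K * ∑ j, |ℓ j w|) ^ p := by gcongr
    _ = K ^ p * (∑ j, |ℓ j w|) ^ p := Real.mul_rpow (by positivity) (by positivity)
    _ ≤ K ^ p * (_ * ∑ j, |ℓ j w| ^ p) := by
      gcongr
      exact Real.rpow_sum_le_const_mul_sum_rpow_of_nonneg _ hp fun _ _ => abs_nonneg _
    _ = _ := by ring

lemma exists_rpow_opNorm_le_sum_abs_rpow [FiniteDimensional ℝ E] [FiniteDimensional ℝ F]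
    {p : ℝ} (hp : 1 ≤ p) :
    ∃ (d r : ℕ) (ℓ : Fin d → F →L[ℝ] ℝ) (e : Fin r → E) (C : ℝ), 0 ≤ C ∧
      ∀ T : E →L[ℝ] F, ‖T‖ ^ p ≤ C * ∑ a, ∑ j, |ℓ j (T (e a))| ^ p := by
  obtain ⟨d, ℓ, C, hC, hℓ⟩ := exists_rpow_norm_le_sum_abs_rpow (W := F) hp
  let b := Module.finBasis ℝ E
  obtain ⟨K, hK, hb⟩ := b.exists_opNorm_le (F := F)
  refine ⟨d, _, ℓ, b, K ^ p * ((Finset.univ : Finset (Fin (Module.finrank ℝ E))).card ^ (p - 1) * C),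
    by positivity, fun T => ?_⟩
  have h1 : ‖T‖ ≤ K * ∑ a, ‖T (b a)‖ := hb (by positivity) fun a =>
    Finset.single_le_sum (f := fun a => ‖T (b a)‖) (fun _ _ => norm_nonneg _) (Finset.mem_univ a)
  calc ‖T‖ ^ p ≤ (K * ∑ a, ‖T (b a)‖) ^ p := by gcongr
    _ = K ^ p * (∑ a, ‖T (b a)‖) ^ p := Real.mul_rpow (by positivity) (by positivity)
    _ ≤ K ^ p * (_ * ∑ a, ‖T (b a)‖ ^ p) := by
      gcongr
      exact Real.rpow_sum_le_const_mul_sum_rpow_of_nonneg _ hp fun _ _ => norm_nonneg _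
    _ ≤ K ^ p * (_ * ∑ a, C * ∑ j, |ℓ j (T (b a))| ^ p) := by
      gcongr with a
      exact hℓ _
    _ = _ := by rw [← Finset.mul_sum]; ring

variable [MeasurableSpace E] [BorelSpace E] [FiniteDimensional ℝ E]

lemma exists_integral_abs_rpow_fderiv_apply_le (μ : Measure E) [μ.IsAddHaarMeasure]
    {q : ℝ} (hq : 0 ≤ q) (ℓ : F →L[ℝ] ℝ) (e : E) :
    ∃ C : ℝ, 0 ≤ C ∧ ∀ h : E → F, ContDiff ℝ (⊤ : ℕ∞) h → HasCompactSupport h →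
      ∫ x, |ℓ (fderiv ℝ h x e)| ^ (q + 2) ∂μ
        ≤ C * ∫ x, ‖fderiv ℝ h x‖ ^ q * (‖fderiv ℝ (fderiv ℝ h) x‖ * ‖h x‖) ∂μ := by
  refine ⟨(q + 1) * ((‖ℓ‖ * ‖e‖) ^ q * ((‖ℓ‖ * ‖e‖ * ‖e‖) * ‖ℓ‖)), by positivity,
    fun h hh hs => ?_⟩
  have hd : Differentiable ℝ h := hh.differentiable (by simp)
  have hh' : ContDiff ℝ (⊤ : ℕ∞) (fderiv ℝ h) := hh.fderiv_right (by simp)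
  have hd' : Differentiable ℝ (fderiv ℝ h) := hh'.differentiable (by simp)
  have hc' : Continuous (fderiv ℝ h) := hh'.continuous
  have hc'' : Continuous (fderiv ℝ (fderiv ℝ h)) :=
    (hh'.fderiv_right (m := (⊤ : ℕ∞)) (by simp)).continuous
  have hcw : Continuous fun x => ℓ (fderiv ℝ h x e) := by fun_prop
  have hcq : Continuous fun x => |ℓ (fderiv ℝ h x e)| ^ q :=
    hcw.abs.rpow_const fun _ => Or.inr hq
  have hv : ∀ x, fderiv ℝ (fun y => ℓ (h y)) x e = ℓ (fderiv ℝ h x e) := fun x => by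
    have := (ℓ.hasFDerivAt.comp x (hd x).hasFDerivAt).fderiv
    simp only [Function.comp_def] at this
    rw [this]; rfl
  have hw : ∀ x, HasFDerivAt (fun y => ℓ (fderiv ℝ h y e))
      (ℓ ∘L ((ContinuousLinearMap.apply ℝ F e) ∘L fderiv ℝ (fderiv ℝ h) x)) x := fun x =>
    ℓ.hasFDerivAt.comp x
      ((ContinuousLinearMap.apply ℝ F e).hasFDerivAt.comp x (hd' x).hasFDerivAt)
  have hψ : ∀ x, HasFDerivAt (fun y => |ℓ (fderiv ℝ h y e)| ^ q * ℓ (fderiv ℝ h y e))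
      (((q + 1) * |ℓ (fderiv ℝ h x e)| ^ q) •
        (ℓ ∘L ((ContinuousLinearMap.apply ℝ F e) ∘L fderiv ℝ (fderiv ℝ h) x))) x := fun x =>
    HasDerivAt.comp_hasFDerivAt (h₂ := fun s : ℝ => |s| ^ q * s) x
      (hasDerivAt_abs_rpow_mul_self hq (ℓ (fderiv ℝ h x e))) (hw x)
  have hψ' : ∀ x, fderiv ℝ (fun y => |ℓ (fderiv ℝ h y e)| ^ q * ℓ (fderiv ℝ h y e)) x e
      = ((q + 1) * |ℓ (fderiv ℝ h x e)| ^ q) * ℓ (fderiv ℝ (fderiv ℝ h) x e e) := fun x => by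
    rw [(hψ x).fderiv]; rfl
  have hsl : HasCompactSupport fun x => ℓ (h x) := hs.comp_left (g := ℓ) (map_zero ℓ)
  have hsw : HasCompactSupport fun x => ℓ (fderiv ℝ h x e) :=
    (hs.fderiv ℝ).comp_left (g := fun T : E →L[ℝ] F => ℓ (T e)) (by simp)
  have hibp := integral_mul_fderiv_eq_neg_fderiv_mul_of_integrable (μ := μ)
    (f := fun y => |ℓ (fderiv ℝ h y e)| ^ q * ℓ (fderiv ℝ h y e)) (g := fun y => ℓ (h y)) (v := e)
    (by
      simp only [hψ']
      exact Continuous.integrable_of_hasCompactSupport (by fun_prop) hsl.mul_left)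
    (by
      simp only [hv]
      exact Continuous.integrable_of_hasCompactSupport (by fun_prop) hsw.mul_left)
    (Continuous.integrable_of_hasCompactSupport (by fun_prop) hsl.mul_left)
    (fun x _ => (hψ x).differentiableAt)
    (fun x _ => (ℓ.hasFDerivAt.comp x (hd x).hasFDerivAt).differentiableAt)
  simp only [hψ', hv] at hibp
  have hpow : ∀ x, |ℓ (fderiv ℝ h x e)| ^ (q + 2)
      = |ℓ (fderiv ℝ h x e)| ^ q * ℓ (fderiv ℝ h x e) * ℓ (fderiv ℝ h x e) := fun x => by
    rw [Real.rpow_add_of_nonneg (abs_nonneg _) hq (by norm_num), Real.rpow_two, sq_abs]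
    ring
  simp only [hpow]
  rw [hibp, ← integral_neg, ← integral_const_mul]
  refine integral_mono ?_ ?_ fun x => ?_
  · exact Continuous.integrable_of_hasCompactSupport (by fun_prop) hsl.mul_left.neg
  · have hn'' : Continuous fun x => ‖fderiv ℝ (fderiv ℝ h) x‖ :=
      (continuous_norm (E := E →L[ℝ] E →L[ℝ] F)).comp hc''
    have : Continuous fun x => ‖fderiv ℝ h x‖ ^ q := hc'.norm.rpow_const fun _ => Or.inr hq
    exact Continuous.integrable_of_hasCompactSupport
      (continuous_const.fun_mul (this.fun_mul (hn''.fun_mul hh.continuous.norm)))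
      hs.norm.mul_left.mul_left.mul_left
  · have h1 : |ℓ (fderiv ℝ h x e)| ≤ ‖ℓ‖ * ‖e‖ * ‖fderiv ℝ h x‖ :=
      calc _ ≤ ‖ℓ‖ * ‖fderiv ℝ h x e‖ := ℓ.le_opNorm _
        _ ≤ ‖ℓ‖ * (‖fderiv ℝ h x‖ * ‖e‖) := by gcongr; exact ContinuousLinearMap.le_opNorm _ _
        _ = _ := by ring
    have h2 : |ℓ (fderiv ℝ (fderiv ℝ h) x e e)|
        ≤ (‖ℓ‖ * ‖e‖ * ‖e‖) * ‖fderiv ℝ (fderiv ℝ h) x‖ :=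
      calc _ ≤ ‖ℓ‖ * ‖fderiv ℝ (fderiv ℝ h) x e e‖ := ℓ.le_opNorm _
        _ ≤ ‖ℓ‖ * (‖fderiv ℝ (fderiv ℝ h) x‖ * ‖e‖ * ‖e‖) := by
          gcongr; exact ContinuousLinearMap.le_opNorm₂ _ _ _
        _ = _ := by ring
    have h3 : |ℓ (h x)| ≤ ‖ℓ‖ * ‖h x‖ := ℓ.le_opNorm _
    calc -((q + 1) * |ℓ (fderiv ℝ h x e)| ^ q * ℓ (fderiv ℝ (fderiv ℝ h) x e e) * ℓ (h x))
        ≤ |(q + 1) * |ℓ (fderiv ℝ h x e)| ^ q * ℓ (fderiv ℝ (fderiv ℝ h) x e e) * ℓ (h x)| :=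
          neg_le_abs _
      _ = (q + 1) * (|ℓ (fderiv ℝ h x e)| ^ q *
            (|ℓ (fderiv ℝ (fderiv ℝ h) x e e)| * |ℓ (h x)|)) := by
          rw [abs_mul, abs_mul, abs_of_nonneg (a := (q + 1) * |ℓ (fderiv ℝ h x e)| ^ q)
            (by positivity)]
          ring
      _ ≤ (q + 1) * ((‖ℓ‖ * ‖e‖ * ‖fderiv ℝ h x‖) ^ q *
            (((‖ℓ‖ * ‖e‖ * ‖e‖) * ‖fderiv ℝ (fderiv ℝ h) x‖) * (‖ℓ‖ * ‖h x‖))) := by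
          gcongr
      _ = _ := by
          rw [Real.mul_rpow (by positivity) (by positivity)]
          ring

lemma exists_integral_rpow_norm_fderiv_le [FiniteDimensional ℝ F] (μ : Measure E)
    [μ.IsAddHaarMeasure] {q : ℝ} (hq : 0 ≤ q) :
    ∃ C : ℝ, 0 ≤ C ∧ ∀ h : E → F, ContDiff ℝ (⊤ : ℕ∞) h → HasCompactSupport h →
      ∫ x, ‖fderiv ℝ h x‖ ^ (q + 2) ∂μ
        ≤ C * ∫ x, ‖fderiv ℝ h x‖ ^ q * (‖iteratedFDeriv ℝ 2 h x‖ * ‖h x‖) ∂μ := by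
  simp_rw [← norm_iteratedFDeriv_fderiv (n := 1), norm_iteratedFDeriv_one]
  obtain ⟨d, r, ℓ, e, C, hC, hT⟩ :=
    exists_rpow_opNorm_le_sum_abs_rpow (E := E) (F := F) (p := q + 2) (by linarith)
  choose K hK hint using fun a j =>
    exists_integral_abs_rpow_fderiv_apply_le μ hq (ℓ j) (e a)
  refine ⟨C * ∑ a, ∑ j, K a j,
    mul_nonneg hC (Finset.sum_nonneg fun a _ => Finset.sum_nonneg fun j _ => hK a j),
    fun h hh hs => ?_⟩
  have hc' : Continuous (fderiv ℝ h) := hh.continuous_fderiv (by simp)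
  have hi : ∀ a j, Integrable (fun x => |ℓ j (fderiv ℝ h x (e a))| ^ (q + 2)) μ := fun a j => by
    refine Continuous.integrable_of_hasCompactSupport
      (Continuous.rpow_const (by fun_prop) fun _ => Or.inr (by linarith))
      ((hs.fderiv ℝ).comp_left (g := fun T : E →L[ℝ] F => |ℓ j (T (e a))| ^ (q + 2)) ?_)
    simp [Real.zero_rpow (show q + 2 ≠ 0 by linarith)]
  calc ∫ x, ‖fderiv ℝ h x‖ ^ (q + 2) ∂μ
      ≤ ∫ x, C * ∑ a, ∑ j, |ℓ j (fderiv ℝ h x (e a))| ^ (q + 2) ∂μ := by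
        refine integral_mono_of_nonneg (.of_forall fun x => by positivity) ?_
          (.of_forall fun x => hT _)
        exact (integrable_finsetSum _ fun a _ => integrable_finsetSum _ fun j _ =>
          hi a j).const_mul C
    _ = C * ∑ a, ∑ j, ∫ x, |ℓ j (fderiv ℝ h x (e a))| ^ (q + 2) ∂μ := by
        rw [integral_const_mul, integral_finsetSum _ fun a _ => integrable_finsetSum _ fun j _ =>
          hi a j]
        simp_rw [integral_finsetSum _ fun j _ => hi _ j]
    _ ≤ C * ∑ a, ∑ j, K a j * ∫ x, ‖fderiv ℝ h x‖ ^ q *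
          (‖fderiv ℝ (fderiv ℝ h) x‖ * ‖h x‖) ∂μ := by
        gcongr with a _ j _
        exact hint a j h hh hs
    _ = _ := by simp_rw [← Finset.sum_mul]; ring

end IntegrationByParts

section Interpolation

lemma exists_rpow_mul_rpow_mul_rpow_le {w₁ w₂ w₃ δ : ℝ} (h₁ : 0 ≤ w₁) (h₂ : 0 ≤ w₂)
    (h₃ : 0 < w₃) (hw : w₁ + w₂ + w₃ = 1) (hδ : 0 < δ) :
    ∃ D : ℝ, 0 ≤ D ∧ ∀ X Y Z : ℝ, 0 ≤ X → 0 ≤ Y → 0 ≤ Z →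
      X ^ w₁ * Y ^ w₂ * Z ^ w₃ ≤ δ * X + δ * Y + D * Z := by
  refine ⟨δ ^ (-(w₁ + w₂) / w₃), by positivity, fun X Y Z hX hY hZ => ?_⟩
  set D := δ ^ (-(w₁ + w₂) / w₃) with hD
  have hD0 : 0 ≤ D := by positivity
  have hcancel : δ ^ w₁ * δ ^ w₂ * D ^ w₃ = 1 := by
    rw [hD, ← Real.rpow_mul hδ.le, ← Real.rpow_add hδ, ← Real.rpow_add hδ,
      div_mul_cancel₀ _ h₃.ne', add_neg_cancel, Real.rpow_zero]
  calc X ^ w₁ * Y ^ w₂ * Z ^ w₃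
      = (δ * X) ^ w₁ * (δ * Y) ^ w₂ * (D * Z) ^ w₃ := by
        rw [Real.mul_rpow hδ.le hX, Real.mul_rpow hδ.le hY, Real.mul_rpow hD0 hZ]
        linear_combination (-(X ^ w₁ * Y ^ w₂ * Z ^ w₃)) * hcancel
    _ ≤ w₁ * (δ * X) + w₂ * (δ * Y) + w₃ * (D * Z) :=
        Real.geom_mean_le_arith_mean3_weighted h₁ h₂ h₃.le (by positivity) (by positivity)
          (by positivity) hw
    _ ≤ 1 * (δ * X) + 1 * (δ * Y) + 1 * (D * Z) := by gcongr <;> linarith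
    _ = _ := by ring

lemma integral_add_add {α : Type*} [MeasurableSpace α] {μ : Measure α} {u v w : α → ℝ}
    (hu : Integrable u μ) (hv : Integrable v μ) (hw : Integrable w μ) :
    ∫ x, u x + v x + w x ∂μ = ∫ x, u x ∂μ + ∫ x, v x ∂μ + ∫ x, w x ∂μ := by
  rw [← integral_add hu hv]
  exact integral_add (hu.add hv) hw

variable {E F : Type*} [NormedAddCommGroup E] [NormedSpace ℝ E]
  [NormedAddCommGroup F] [NormedSpace ℝ F]

lemma norm_iteratedFDeriv_iteratedFDeriv (f : E → F) (x : E) (k i : ℕ) :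
    ‖iteratedFDeriv ℝ k (iteratedFDeriv ℝ i f) x‖ = ‖iteratedFDeriv ℝ (k + i) f x‖ := by
  induction i generalizing k with
  | zero => rw [iteratedFDeriv_zero_eq_comp, LinearIsometryEquiv.norm_iteratedFDeriv_comp_left,
      add_zero]
  | succ i ih =>
    let I : (E →L[ℝ] (E [×i]→L[ℝ] F)) ≃ₗᵢ[ℝ] (E [×(i + 1)]→L[ℝ] F) :=
      (continuousMultilinearCurryLeftEquiv ℝ (fun _ => E) F).symm
    have hI : iteratedFDeriv ℝ (i + 1) f = I ∘ fderiv ℝ (iteratedFDeriv ℝ i f) :=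
      iteratedFDeriv_succ_eq_comp_left
    rw [hI, LinearIsometryEquiv.norm_iteratedFDeriv_comp_left (𝕜 := ℝ)
      (F := E →L[ℝ] (E [×i]→L[ℝ] F)) (G := E [×(i + 1)]→L[ℝ] F) I,
      norm_iteratedFDeriv_fderiv, ih, add_right_comm, add_assoc]

instance finiteDimensional_continuousMultilinearMap [FiniteDimensional ℝ E]
    [FiniteDimensional ℝ F] (i : ℕ) : FiniteDimensional ℝ (E [×i]→L[ℝ] F) :=
  Module.Finite.of_injective
    (ContinuousMultilinearMap.toMultilinearMapLinear (R' := ℝ) (A := ℝ)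
      (M₁ := fun _ : Fin i => E) (M₂ := F))
    ContinuousMultilinearMap.toMultilinearMap_injective

/-- The integrand `|∇^(i+1) f| ^ (2n/i)` of the scale-invariant interpolation inequality between
`∇f ∈ L^∞` and `∇^(n+1) f ∈ L²`, set to zero for `i = 0`. -/
def interpPow (n i : ℕ) (f : E → F) (x : E) : ℝ :=
  if i = 0 then 0 else ‖iteratedFDeriv ℝ (i + 1) f x‖ ^ (2 * n / i : ℝ)

lemma interpPow_nonneg (n i : ℕ) (f : E → F) (x : E) : 0 ≤ interpPow n i f x := by
  unfold interpPow; split_ifs <;> positivity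

lemma interpPow_self {n : ℕ} (hn : n ≠ 0) (f : E → F) (x : E) :
    interpPow n n f x = ‖iteratedFDeriv ℝ (n + 1) f x‖ ^ 2 := by
  rw [interpPow, if_neg hn, mul_div_cancel_right₀ _ (by exact_mod_cast hn), Real.rpow_two]

lemma norm_iteratedFDeriv_le_interpPow_rpow {n : ℕ} (hn : n ≠ 0) (i : ℕ) {f : E → F} {x : E}
    (hf : ‖fderiv ℝ f x‖ ≤ 1) :
    ‖iteratedFDeriv ℝ (i + 1) f x‖ ≤ interpPow n i f x ^ (i / (2 * n) : ℝ) := by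
  have hn' : (n : ℝ) ≠ 0 := by exact_mod_cast hn
  rcases eq_or_ne i 0 with rfl | hi
  · simpa [interpPow, norm_iteratedFDeriv_one] using hf
  · have hi' : (i : ℝ) ≠ 0 := by exact_mod_cast hi
    rw [interpPow, if_neg hi, ← Real.rpow_mul (norm_nonneg _)]
    rw [show (2 * n / i : ℝ) * (i / (2 * n)) = 1 by field_simp, Real.rpow_one]

variable [MeasurableSpace E] [BorelSpace E]

lemma integrable_interpPow {n : ℕ} (hn : n ≠ 0) (i : ℕ) (μ : Measure E)
    [IsFiniteMeasureOnCompacts μ] {f : E → F} (hf : ContDiff ℝ (⊤ : ℕ∞) f)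
    (hs : HasCompactSupport f) : Integrable (interpPow n i f) μ := by
  unfold interpPow
  rcases eq_or_ne i 0 with rfl | hi
  · simp
  · have hpos : 0 < (2 * n / i : ℝ) := by positivity
    simp only [if_neg hi]
    refine Continuous.integrable_of_hasCompactSupport
      ((hf.continuous_iteratedFDeriv (by exact_mod_cast le_top)).norm.rpow_const
        fun _ => Or.inr hpos.le) ?_
    exact (hs.iteratedFDeriv (i + 1)).comp_left
      (g := fun T : E [×(i + 1)]→L[ℝ] F => ‖T‖ ^ (2 * n / i : ℝ)) (by simp [hpos.ne'])

lemma integrable_norm_iteratedFDeriv_mul (i j l : ℕ) (μ : Measure E)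
    [IsFiniteMeasureOnCompacts μ] {f g k : E → F} (hf : ContDiff ℝ (⊤ : ℕ∞) f)
    (hg : ContDiff ℝ (⊤ : ℕ∞) g) (hk : ContDiff ℝ (⊤ : ℕ∞) k) (hks : HasCompactSupport k) :
    Integrable (fun x => ‖iteratedFDeriv ℝ i f x‖ * ‖iteratedFDeriv ℝ j g x‖ *
      ‖iteratedFDeriv ℝ l k x‖) μ :=
  Continuous.integrable_of_hasCompactSupport
    (((hf.continuous_iteratedFDeriv (by exact_mod_cast le_top)).norm.mul
      (hg.continuous_iteratedFDeriv (by exact_mod_cast le_top)).norm).mul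
      (hk.continuous_iteratedFDeriv (by exact_mod_cast le_top)).norm)
    (hks.iteratedFDeriv l).norm.mul_left

variable [FiniteDimensional ℝ E] [FiniteDimensional ℝ F]

variable (E F) in
lemma exists_integral_interpPow_le_succ {n : ℕ} (μ : Measure E) [μ.IsAddHaarMeasure] {j : ℕ}
    (hj : j < n) :
    ∃ C : ℝ, 0 ≤ C ∧ ∀ f : E → F, ContDiff ℝ (⊤ : ℕ∞) f → HasCompactSupport f →
      (∀ x, ‖fderiv ℝ f x‖ ≤ 1) →
      ∫ x, interpPow n j f x ∂μ ≤ C * ∫ x, interpPow n (j + 1) f x ∂μ := by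
  have hn : n ≠ 0 := by lia
  induction j with
  | zero => exact ⟨0, le_rfl, fun f _ _ _ => by simp [interpPow]⟩
  | succ j ih =>
    obtain ⟨C, hC, hprev⟩ := ih (by lia)
    have hn' : (0 : ℝ) < n := by positivity
    have hjn : (j : ℝ) + 1 < n := by exact_mod_cast hj
    set q : ℝ := 2 * n / (j + 1 : ℕ) - 2 with hq
    have hq0 : 0 ≤ q := by
      rw [hq, sub_nonneg, le_div_iff₀ (by positivity)]
      push_cast; linarith
    obtain ⟨K, hK, hint⟩ :=
      exists_integral_rpow_norm_fderiv_le (F := E [×(j + 1)]→L[ℝ] F) μ hq0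
    set δ : ℝ := 1 / (2 * (K + 1) * (C + 1)) with hδ
    have hδ0 : 0 < δ := by positivity
    obtain ⟨D, hD, hyoung⟩ := exists_rpow_mul_rpow_mul_rpow_le (w₁ := j / (2 * n))
      (w₂ := 1 - (j + 1) / n) (w₃ := (j + 2) / (2 * n)) (by positivity)
      (by rw [sub_nonneg, div_le_one hn']; exact hjn.le) (by positivity)
      (by field_simp; ring) hδ0
    refine ⟨2 * K * D, by positivity, fun f hf hs h1 => ?_⟩
    have hsmooth : ContDiff ℝ (⊤ : ℕ∞) (iteratedFDeriv ℝ (j + 1) f) :=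
      hf.iteratedFDeriv_right (by norm_cast)
    have key := hint _ hsmooth (hs.iteratedFDeriv (j + 1))
    have hsnd : ∀ x, ‖iteratedFDeriv ℝ 2 (iteratedFDeriv ℝ (j + 1) f) x‖
        = ‖iteratedFDeriv ℝ (j + 2 + 1) f x‖ := fun x => by
      rw [norm_iteratedFDeriv_iteratedFDeriv, show 2 + (j + 1) = j + 2 + 1 by ring]
    simp only [norm_fderiv_iteratedFDeriv, hsnd] at key
    have hpt : ∀ x, ‖iteratedFDeriv ℝ (j + 1 + 1) f x‖ ^ q *
        (‖iteratedFDeriv ℝ (j + 2 + 1) f x‖ * ‖iteratedFDeriv ℝ (j + 1) f x‖)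
        ≤ δ * interpPow n j f x + δ * interpPow n (j + 1) f x
          + D * interpPow n (j + 2) f x := fun x => by
      refine le_trans ?_ (hyoung _ _ _ (interpPow_nonneg n j f x)
        (interpPow_nonneg n (j + 1) f x) (interpPow_nonneg n (j + 2) f x))
      have e0 := norm_iteratedFDeriv_le_interpPow_rpow hn j (h1 x)
      have e2 := norm_iteratedFDeriv_le_interpPow_rpow hn (j + 2) (h1 x)
      have e1 : ‖iteratedFDeriv ℝ (j + 1 + 1) f x‖ ^ q
          = interpPow n (j + 1) f x ^ (1 - (j + 1) / n : ℝ) := by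
        rw [interpPow, if_neg (by lia), ← Real.rpow_mul (norm_nonneg _), hq]
        congr 1
        push_cast
        field_simp
      push_cast at e2
      rw [e1]
      calc _ = ‖iteratedFDeriv ℝ (j + 1) f x‖ * interpPow n (j + 1) f x ^ (1 - (j + 1) / n : ℝ) *
            ‖iteratedFDeriv ℝ (j + 2 + 1) f x‖ := by ring
        _ ≤ _ := by
          have := interpPow_nonneg n (j + 1) f x
          have := interpPow_nonneg n j f x
          gcongr
    have hi := fun i => integrable_interpPow hn i μ hf hs
    have hle : ∫ x, ‖iteratedFDeriv ℝ (j + 1 + 1) f x‖ ^ q *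
        (‖iteratedFDeriv ℝ (j + 2 + 1) f x‖ * ‖iteratedFDeriv ℝ (j + 1) f x‖) ∂μ
        ≤ δ * ∫ x, interpPow n j f x ∂μ + δ * ∫ x, interpPow n (j + 1) f x ∂μ
          + D * ∫ x, interpPow n (j + 2) f x ∂μ := by
      rw [← integral_const_mul, ← integral_const_mul, ← integral_const_mul,
        ← integral_add_add ((hi _).const_mul _) ((hi _).const_mul _) ((hi _).const_mul _)]
      exact integral_mono_of_nonneg (.of_forall fun x => by positivity)
        ((((hi _).const_mul _).add ((hi _).const_mul _)).add ((hi _).const_mul _))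
        (.of_forall hpt)
    have hlhs : ∫ x, interpPow n (j + 1) f x ∂μ
        = ∫ x, ‖iteratedFDeriv ℝ (j + 1 + 1) f x‖ ^ (q + 2) ∂μ := by
      simp only [interpPow, if_neg (Nat.succ_ne_zero j), hq, sub_add_cancel]
    have hp := hprev f hf hs h1
    have hA : 0 ≤ ∫ x, interpPow n (j + 1) f x ∂μ := integral_nonneg (interpPow_nonneg _ _ _)
    have hKδ : K * δ * (C + 1) ≤ 1 / 2 := by
      rw [hδ]
      field_simp
      linarith
    rw [← hlhs] at key
    have h2 : ∫ x, interpPow n (j + 1) f x ∂μ ≤ 1 / 2 * ∫ x, interpPow n (j + 1) f x ∂μ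
        + K * D * ∫ x, interpPow n (j + 2) f x ∂μ :=
      calc _ ≤ K * (δ * (C * ∫ x, interpPow n (j + 1) f x ∂μ)
            + δ * ∫ x, interpPow n (j + 1) f x ∂μ + D * ∫ x, interpPow n (j + 2) f x ∂μ) := by
            refine key.trans ?_
            gcongr
            refine hle.trans ?_
            gcongr
        _ = K * δ * (C + 1) * (∫ x, interpPow n (j + 1) f x ∂μ)
            + K * D * ∫ x, interpPow n (j + 2) f x ∂μ := by ring
        _ ≤ _ := by gcongr
    linarith

variable (E F) in
lemma exists_integral_interpPow_le {n : ℕ} (μ : Measure E) [μ.IsAddHaarMeasure] {j : ℕ}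
    (hj : j ≤ n) :
    ∃ C : ℝ, 0 ≤ C ∧ ∀ f : E → F, ContDiff ℝ (⊤ : ℕ∞) f → HasCompactSupport f →
      (∀ x, ‖fderiv ℝ f x‖ ≤ 1) →
      ∫ x, interpPow n j f x ∂μ ≤ C * ∫ x, interpPow n n f x ∂μ := by
  induction hj using Nat.decreasingInduction with
  | self => exact ⟨1, zero_le_one, fun f _ _ _ => by rw [one_mul]⟩
  | of_succ j hj ih =>
    obtain ⟨C, hC, h⟩ := ih
    obtain ⟨C', hC', h'⟩ := exists_integral_interpPow_le_succ E F μ hj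
    refine ⟨C' * C, by positivity, fun f hf hs h1 => (h' f hf hs h1).trans ?_⟩
    rw [mul_assoc]
    gcongr
    exact h f hf hs h1

variable (E F) in
lemma exists_integral_triple_le_of_norm_fderiv_le_one {n : ℕ} (hn : n ≠ 0) (μ : Measure E)
    [μ.IsAddHaarMeasure] {j : ℕ} (hj : j ≤ n) :
    ∃ C : ℝ, 0 ≤ C ∧ ∀ f g k : E → F, ContDiff ℝ (⊤ : ℕ∞) f → HasCompactSupport f →
      ContDiff ℝ (⊤ : ℕ∞) g → HasCompactSupport g → ContDiff ℝ (⊤ : ℕ∞) k → HasCompactSupport k →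
      (∀ x, ‖fderiv ℝ f x‖ ≤ 1) → (∀ x, ‖fderiv ℝ g x‖ ≤ 1) →
      ∫ x, ‖iteratedFDeriv ℝ (j + 1) f x‖ * ‖iteratedFDeriv ℝ (n - j + 1) g x‖ *
          ‖iteratedFDeriv ℝ (n + 1) k x‖ ∂μ
        ≤ C * (∫ x, ‖iteratedFDeriv ℝ (n + 1) f x‖ ^ 2 ∂μ
          + ∫ x, ‖iteratedFDeriv ℝ (n + 1) g x‖ ^ 2 ∂μ
          + ∫ x, ‖iteratedFDeriv ℝ (n + 1) k x‖ ^ 2 ∂μ) := by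
  obtain ⟨C₁, hC₁, h₁⟩ := exists_integral_interpPow_le E F μ hj
  obtain ⟨C₂, hC₂, h₂⟩ := exists_integral_interpPow_le E F μ (n.sub_le j)
  refine ⟨C₁ + C₂ + 1, by positivity, fun f g k hf hfs hg hgs hk hks hf1 hg1 => ?_⟩
  simp only [← interpPow_self hn]
  have hif := integrable_interpPow hn j μ hf hfs
  have hig := integrable_interpPow hn (n - j) μ hg hgs
  have hik := integrable_interpPow hn n μ hk hks
  have hpt : ∀ x, ‖iteratedFDeriv ℝ (j + 1) f x‖ * ‖iteratedFDeriv ℝ (n - j + 1) g x‖ *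
      ‖iteratedFDeriv ℝ (n + 1) k x‖
      ≤ interpPow n j f x + interpPow n (n - j) g x + interpPow n n k x := fun x => by
    have e1 := norm_iteratedFDeriv_le_interpPow_rpow hn j (hf1 x)
    have e2 := norm_iteratedFDeriv_le_interpPow_rpow hn (n - j) (hg1 x)
    have e3 : ‖iteratedFDeriv ℝ (n + 1) k x‖ = interpPow n n k x ^ (1 / 2 : ℝ) := by
      rw [interpPow_self hn, ← Real.sqrt_eq_rpow, Real.sqrt_sq (norm_nonneg _)]
    have p1 := interpPow_nonneg n j f x
    have p2 := interpPow_nonneg n (n - j) g x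
    have p3 := interpPow_nonneg n n k x
    have hn' : (0 : ℝ) < n := by positivity
    have hj' : (j : ℝ) ≤ n := by exact_mod_cast hj
    have w1 : (j / (2 * n) : ℝ) ≤ 1 := by rw [div_le_one (by positivity)]; linarith
    have w2 : ((n - j : ℕ) / (2 * n) : ℝ) ≤ 1 := by
      rw [div_le_one (by positivity), Nat.cast_sub hj]; linarith [Nat.cast_nonneg (α := ℝ) j]
    calc _ ≤ interpPow n j f x ^ (j / (2 * n) : ℝ) *
          interpPow n (n - j) g x ^ ((n - j : ℕ) / (2 * n) : ℝ) *
          interpPow n n k x ^ (1 / 2 : ℝ) := by rw [e3]; gcongr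
      _ ≤ (j / (2 * n) : ℝ) * interpPow n j f x + ((n - j : ℕ) / (2 * n) : ℝ) *
          interpPow n (n - j) g x + (1 / 2 : ℝ) * interpPow n n k x := by
          refine Real.geom_mean_le_arith_mean3_weighted (by positivity) (by positivity)
            (by positivity) p1 p2 p3 ?_
          rw [Nat.cast_sub hj]
          field_simp
          ring
      _ ≤ 1 * interpPow n j f x + 1 * interpPow n (n - j) g x + 1 * interpPow n n k x := by
          gcongr; norm_num
      _ = _ := by ring
  have hnn : ∀ u : E → F, 0 ≤ ∫ x, interpPow n n u x ∂μ := fun u =>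
    integral_nonneg (interpPow_nonneg _ _ _)
  calc _ ≤ ∫ x, interpPow n j f x + interpPow n (n - j) g x + interpPow n n k x ∂μ :=
        integral_mono (integrable_norm_iteratedFDeriv_mul _ _ _ μ hf hg hk hks)
          ((hif.add hig).add hik) hpt
    _ = ∫ x, interpPow n j f x ∂μ + ∫ x, interpPow n (n - j) g x ∂μ
        + ∫ x, interpPow n n k x ∂μ :=
        integral_add_add hif hig hik
    _ ≤ C₁ * ∫ x, interpPow n n f x ∂μ + C₂ * ∫ x, interpPow n n g x ∂μ
        + ∫ x, interpPow n n k x ∂μ := by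
        gcongr
        · exact h₁ f hf hfs hf1
        · exact h₂ g hg hgs hg1
    _ ≤ _ := by nlinarith [mul_nonneg hC₁ (hnn g), mul_nonneg hC₁ (hnn k), mul_nonneg hC₂ (hnn f),
        mul_nonneg hC₂ (hnn k), hnn f, hnn g, hnn k]

variable (E F) in
lemma exists_integral_triple_le {n : ℕ} (hn : n ≠ 0) (μ : Measure E)
    [μ.IsAddHaarMeasure] {j : ℕ} (hj : j ≤ n) :
    ∃ C : ℝ, 0 ≤ C ∧ ∀ f g k : E → F, ContDiff ℝ (⊤ : ℕ∞) f → HasCompactSupport f →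
      ContDiff ℝ (⊤ : ℕ∞) g → HasCompactSupport g → ContDiff ℝ (⊤ : ℕ∞) k → HasCompactSupport k →
      ∀ M : ℝ, 0 < M → (∀ x, ‖fderiv ℝ f x‖ ≤ M) → (∀ x, ‖fderiv ℝ g x‖ ≤ M) →
      ∫ x, ‖iteratedFDeriv ℝ (j + 1) f x‖ * ‖iteratedFDeriv ℝ (n - j + 1) g x‖ *
          ‖iteratedFDeriv ℝ (n + 1) k x‖ ∂μ
        ≤ C * (∫ x, ‖iteratedFDeriv ℝ (n + 1) f x‖ ^ 2 ∂μ
          + ∫ x, ‖iteratedFDeriv ℝ (n + 1) g x‖ ^ 2 ∂μ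
          + ∫ x, ‖iteratedFDeriv ℝ (n + 1) k x‖ ^ 2 ∂μ) * M := by
  obtain ⟨C, hC, h⟩ := exists_integral_triple_le_of_norm_fderiv_le_one E F hn μ hj
  refine ⟨C, hC, fun f g k hf hfs hg hgs hk hks M hM hfM hgM => ?_⟩
  have hD : ∀ u : E → F, ContDiff ℝ (⊤ : ℕ∞) u → ∀ i x,
      ‖iteratedFDeriv ℝ i (M⁻¹ • u) x‖ = M⁻¹ * ‖iteratedFDeriv ℝ i u x‖ := fun u hu i x => by
    rw [iteratedFDeriv_const_smul_apply (hu.of_le (by exact_mod_cast le_top)).contDiffAt,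
      norm_smul, Real.norm_of_nonneg (by positivity)]
  have hD1 : ∀ u : E → F, ContDiff ℝ (⊤ : ℕ∞) u → (∀ x, ‖fderiv ℝ u x‖ ≤ M) →
      ∀ x, ‖fderiv ℝ (M⁻¹ • u) x‖ ≤ 1 := fun u hu huM x => by
    rw [← norm_iteratedFDeriv_one, hD u hu, norm_iteratedFDeriv_one, inv_mul_le_one₀ hM]
    exact huM x
  have hS : ∀ u : E → F, HasCompactSupport u → HasCompactSupport (M⁻¹ • u) := fun u hu =>
    hu.comp_left (g := fun y : F => M⁻¹ • y) (smul_zero _)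
  have key := h (M⁻¹ • f) (M⁻¹ • g) (M⁻¹ • k) (hf.const_smul _) (hS f hfs) (hg.const_smul _)
    (hS g hgs) (hk.const_smul _) (hS k hks) (hD1 f hf hfM) (hD1 g hg hgM)
  simp only [hD f hf, hD g hg, hD k hk, mul_pow, integral_const_mul] at key
  have hrw : ∀ x, M⁻¹ * ‖iteratedFDeriv ℝ (j + 1) f x‖ *
      (M⁻¹ * ‖iteratedFDeriv ℝ (n - j + 1) g x‖) * (M⁻¹ * ‖iteratedFDeriv ℝ (n + 1) k x‖)
      = M⁻¹ ^ 3 * (‖iteratedFDeriv ℝ (j + 1) f x‖ * ‖iteratedFDeriv ℝ (n - j + 1) g x‖ *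
        ‖iteratedFDeriv ℝ (n + 1) k x‖) := fun x => by ring
  simp only [hrw, integral_const_mul] at key
  have := mul_le_mul_of_nonneg_left key (pow_nonneg hM.le 3)
  field_simp at this
  linarith

end Interpolation

section Commutator

lemma fderiv_sub_fderiv_apply_add {E W : Type*} [NormedAddCommGroup E] [NormedSpace ℝ E]
    [NormedAddCommGroup W] [NormedSpace ℝ W] {u v : E → W} {f : E → E}
    (hu : ContDiff ℝ (⊤ : ℕ∞) u) (hv : ContDiff ℝ (⊤ : ℕ∞) v) (hf : ContDiff ℝ (⊤ : ℕ∞) f) (x : E) :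
    fderiv ℝ (fun y => u y - fderiv ℝ v y (f y)) x + fderiv ℝ v x ∘L fderiv ℝ f x
      = fderiv ℝ u x - fderiv ℝ (fderiv ℝ v) x (f x) := by
  have hv' : ContDiff ℝ (⊤ : ℕ∞) (fderiv ℝ v) := hv.fderiv_right (by simp)
  have h1 := (hu.differentiable (by simp) x).hasFDerivAt
  have h2 := (hv'.differentiable (by simp) x).hasFDerivAt
  have h3 := (hf.differentiable (by simp) x).hasFDerivAt
  have hsymm : IsSymmSndFDerivAt ℝ v x :=
    hv.contDiffAt.isSymmSndFDerivAt (by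
      rw [minSmoothness_of_isRCLikeNormedField]; exact WithTop.coe_le_coe.2 le_top)
  rw [(h1.fun_sub (h2.clm_apply h3)).fderiv]
  ext e
  have := hsymm.eq e (f x)
  simp [this]
  abel

lemma contDiff_conv {f g : E3 → E3} (hf : ContDiff ℝ (⊤ : ℕ∞) f) (hg : ContDiff ℝ (⊤ : ℕ∞) g) :
    ContDiff ℝ (⊤ : ℕ∞) (conv f g) :=
  (hg.fderiv_right (m := (⊤ : ℕ∞)) (by simp)).clm_apply hf

lemma contDiff_iteratedFDeriv {E F : Type*} [NormedAddCommGroup E] [NormedSpace ℝ E]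
    [NormedAddCommGroup F] [NormedSpace ℝ F] {g : E → F} (hg : ContDiff ℝ (⊤ : ℕ∞) g) (m : ℕ) :
    ContDiff ℝ (⊤ : ℕ∞) (iteratedFDeriv ℝ m g) :=
  hg.iteratedFDeriv_right (by norm_cast)

lemma contDiff_commGrad (m : ℕ) {f g : E3 → E3} (hf : ContDiff ℝ (⊤ : ℕ∞) f)
    (hg : ContDiff ℝ (⊤ : ℕ∞) g) : ContDiff ℝ (⊤ : ℕ∞) (commGrad m f g) :=
  (contDiff_iteratedFDeriv (contDiff_conv hf hg) m).sub
    (((contDiff_iteratedFDeriv hg m).fderiv_right (m := (⊤ : ℕ∞)) (by simp)).clm_apply hf)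

lemma commGrad_zero {f g : E3 → E3} (hg : ContDiff ℝ (⊤ : ℕ∞) g) : commGrad 0 f g = 0 := by
  funext x
  ext1 v
  have h := ((ContinuousMultilinearMap.apply ℝ (fun _ : Fin 0 => E3) E3 v).hasFDerivAt.comp x
    ((contDiff_iteratedFDeriv hg 0).differentiable (by simp) x).hasFDerivAt).fderiv
  have h' : (⇑(ContinuousMultilinearMap.apply ℝ (fun _ : Fin 0 => E3) E3 v) ∘
      iteratedFDeriv ℝ 0 g) = g := by
    funext y; simp
  rw [h'] at h
  simp [commGrad, conv, h]

lemma commGrad_succ (m : ℕ) {f g : E3 → E3} (hf : ContDiff ℝ (⊤ : ℕ∞) f)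
    (hg : ContDiff ℝ (⊤ : ℕ∞) g) :
    commGrad (m + 1) f g =
      (continuousMultilinearCurryLeftEquiv ℝ (fun _ : Fin (m + 1) => E3) E3).symm ∘
        fun x => fderiv ℝ (commGrad m f g) x
          + fderiv ℝ (iteratedFDeriv ℝ m g) x ∘L fderiv ℝ f x := by
  funext x
  have h := fderiv_sub_fderiv_apply_add (contDiff_iteratedFDeriv (contDiff_conv hf hg) m)
    (contDiff_iteratedFDeriv hg m) hf x
  have h' : fderiv ℝ (commGrad m f g) x + fderiv ℝ (iteratedFDeriv ℝ m g) x ∘L fderiv ℝ f x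
      = fderiv ℝ (iteratedFDeriv ℝ m (conv f g)) x
        - fderiv ℝ (fderiv ℝ (iteratedFDeriv ℝ m g)) x (f x) := h
  rw [Function.comp_apply, h', map_sub, commGrad, iteratedFDeriv_succ_eq_comp_left,
    iteratedFDeriv_succ_eq_comp_left, LinearIsometryEquiv.comp_fderiv]
  rfl

lemma norm_iteratedFDeriv_comp_add_clm_comp_le {E W V : Type*} [NormedAddCommGroup E]
    [NormedSpace ℝ E] [NormedAddCommGroup W] [NormedSpace ℝ W] [NormedAddCommGroup V]
    [NormedSpace ℝ V] (e : (E →L[ℝ] W) ≃ₗᵢ[ℝ] V) {R G : E → E →L[ℝ] W} {F : E → E →L[ℝ] E}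
    (hR : ContDiff ℝ (⊤ : ℕ∞) R) (hG : ContDiff ℝ (⊤ : ℕ∞) G) (hF : ContDiff ℝ (⊤ : ℕ∞) F)
    (k : ℕ) (x : E) :
    ‖iteratedFDeriv ℝ k (e ∘ fun y => R y + G y ∘L F y) x‖ ≤ ‖iteratedFDeriv ℝ k R x‖ +
      ∑ i ∈ Finset.range (k + 1),
        (k.choose i : ℝ) * ‖iteratedFDeriv ℝ i G x‖ * ‖iteratedFDeriv ℝ (k - i) F x‖ := by
  have hk : ((k : ℕ∞) : WithTop ℕ∞) ≤ ((⊤ : ℕ∞) : WithTop ℕ∞) := by exact_mod_cast le_top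
  have hB := (ContinuousLinearMap.compL ℝ E E W).norm_iteratedFDeriv_le_of_bilinear_of_le_one
    hG hF x hk (ContinuousLinearMap.norm_compL_le ℝ E E W)
  rw [LinearIsometryEquiv.norm_iteratedFDeriv_comp_left]
  change ‖iteratedFDeriv ℝ k (R + fun y => G y ∘L F y) x‖ ≤ _
  rw [iteratedFDeriv_add_apply (hR.of_le hk).contDiffAt ((hG.clm_comp hF).of_le hk).contDiffAt]
  exact (norm_add_le _ _).trans (add_le_add le_rfl hB)

lemma exists_norm_iteratedFDeriv_commGrad_le (m k : ℕ) :
    ∃ C : ℝ, 0 ≤ C ∧ ∀ f g : E3 → E3, ContDiff ℝ (⊤ : ℕ∞) f → ContDiff ℝ (⊤ : ℕ∞) g → ∀ x,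
      ‖iteratedFDeriv ℝ k (commGrad m f g) x‖
        ≤ C * ∑ j ∈ Finset.range (m + k),
          ‖iteratedFDeriv ℝ (j + 1) f x‖ * ‖iteratedFDeriv ℝ (m + k - j) g x‖ := by
  induction m generalizing k with
  | zero =>
    refine ⟨0, le_rfl, fun f g _ hg x => ?_⟩
    rw [commGrad_zero hg, show (0 : E3 → E3 [×0]→L[ℝ] E3) = fun _ => 0 from rfl,
      iteratedFDeriv_fun_zero]
    simp
  | succ m ih =>
    obtain ⟨C, hC, h⟩ := ih (k + 1)
    refine ⟨C + ∑ i ∈ Finset.range (k + 1), (k.choose i : ℝ), by positivity,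
      fun f g hf hg x => ?_⟩
    have hR : ContDiff ℝ (⊤ : ℕ∞) (fderiv ℝ (commGrad m f g)) :=
      (contDiff_commGrad m hf hg).fderiv_right (by simp)
    have hG : ContDiff ℝ (⊤ : ℕ∞) (fderiv ℝ (iteratedFDeriv ℝ m g)) :=
      (contDiff_iteratedFDeriv hg m).fderiv_right (by simp)
    have hF : ContDiff ℝ (⊤ : ℕ∞) (fderiv ℝ f) := hf.fderiv_right (by simp)
    set S := ∑ j ∈ Finset.range (m + 1 + k),
      ‖iteratedFDeriv ℝ (j + 1) f x‖ * ‖iteratedFDeriv ℝ (m + 1 + k - j) g x‖ with hS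
    have hterm : ∀ i ∈ Finset.range (k + 1),
        ‖iteratedFDeriv ℝ i (fderiv ℝ (iteratedFDeriv ℝ m g)) x‖ *
          ‖iteratedFDeriv ℝ (k - i) (fderiv ℝ f) x‖ ≤ S := fun i hi => by
      have hi' : i ≤ k := Finset.mem_range_succ_iff.1 hi
      rw [norm_iteratedFDeriv_fderiv, norm_iteratedFDeriv_fderiv,
        norm_iteratedFDeriv_iteratedFDeriv, mul_comm,
        show i + 1 + m = m + 1 + k - (k - i) by lia]
      exact Finset.single_le_sum
        (f := fun j => ‖iteratedFDeriv ℝ (j + 1) f x‖ * ‖iteratedFDeriv ℝ (m + 1 + k - j) g x‖)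
        (fun _ _ => by positivity) (Finset.mem_range.2 (by lia))
    have hfst : ‖iteratedFDeriv ℝ k (fderiv ℝ (commGrad m f g)) x‖ ≤ C * S := by
      rw [norm_iteratedFDeriv_fderiv]
      have := h f g hf hg x
      rwa [show m + (k + 1) = m + 1 + k by ring] at this
    have hB := norm_iteratedFDeriv_comp_add_clm_comp_le
      (E := E3) (W := E3 [×m]→L[ℝ] E3) (V := E3 [×(m + 1)]→L[ℝ] E3)
      (continuousMultilinearCurryLeftEquiv ℝ (fun _ : Fin (m + 1) => E3) E3).symm hR hG hF k x
    rw [commGrad_succ m hf hg]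
    calc _ ≤ C * S + ∑ i ∈ Finset.range (k + 1), (k.choose i : ℝ) * S := by
          refine hB.trans (add_le_add hfst ?_)
          refine Finset.sum_le_sum fun i hi => ?_
          rw [mul_assoc]
          gcongr
          exact hterm i hi
      _ = _ := by rw [← Finset.sum_mul]; ring

lemma abs_contract_le (m : ℕ) (A B : ContinuousMultilinearMap ℝ (fun _ : Fin m => E3) E3) :
    |contract m A B| ≤ 3 ^ m * (‖A‖ * ‖B‖) := by
  have h : ∀ (T : ContinuousMultilinearMap ℝ (fun _ : Fin m => E3) E3) (ι : Fin m → Fin 3),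
      ‖T fun l => EuclideanSpace.single (ι l) 1‖ ≤ ‖T‖ := fun T ι => by
    simpa using T.le_opNorm fun l => EuclideanSpace.single (ι l) (1 : ℝ)
  calc |contract m A B| ≤ ∑ _ι : Fin m → Fin 3, ‖A‖ * ‖B‖ := by
        refine (Finset.abs_sum_le_sum_abs _ _).trans (Finset.sum_le_sum fun ι _ => ?_)
        refine (abs_real_inner_le_norm _ _).trans ?_
        gcongr <;> exact h _ ι
    _ = _ := by simp

end Commutator

section LebesgueNorms

variable {E G : Type*} [NormedAddCommGroup E] [MeasurableSpace E] [BorelSpace E]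
  [NormedAddCommGroup G] {μ : Measure E} {u : E → G}

lemma toReal_eLpNorm_two_sq [IsFiniteMeasureOnCompacts μ] (hu : Continuous u)
    (hs : HasCompactSupport u) : (eLpNorm u 2 μ).toReal ^ 2 = ∫ x, ‖u x‖ ^ 2 ∂μ := by
  rw [(hu.memLp_of_hasCompactSupport hs).eLpNorm_eq_integral_rpow_norm (by norm_num)
    (by norm_num), ENNReal.toReal_ofReal (by positivity)]
  simp only [ENNReal.toReal_ofNat, Real.rpow_two]
  rw [← Real.rpow_natCast, ← Real.rpow_mul (integral_nonneg fun _ => by positivity)]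
  norm_num

lemma norm_le_toReal_eLpNorm_top [μ.IsOpenPosMeasure] [IsFiniteMeasureOnCompacts μ]
    (hu : Continuous u) (hs : HasCompactSupport u) (x : E) :
    ‖u x‖ ≤ (eLpNorm u ∞ μ).toReal := by
  have hfin : eLpNorm u ∞ μ ≠ ∞ := (hu.memLp_of_hasCompactSupport hs).eLpNorm_ne_top
  have hae : ∀ᵐ y ∂μ, ‖u y‖ ≤ (eLpNorm u ∞ μ).toReal := by
    rw [eLpNorm_exponent_top] at hfin ⊢
    filter_upwards [ae_le_eLpNormEssSup (f := u) (μ := μ)] with y hy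
    simpa using ENNReal.toReal_mono hfin hy
  have hclosed : IsClosed {y | ‖u y‖ ≤ (eLpNorm u ∞ μ).toReal} :=
    isClosed_le hu.norm continuous_const
  have : x ∈ closure {y | ‖u y‖ ≤ (eLpNorm u ∞ μ).toReal} := Measure.dense_of_ae hae x
  rwa [hclosed.closure_eq] at this

end LebesgueNorms

/-- For `m ≥ 2` there is `C = C(m)` such that for all
`f, g, k ∈ C₀^∞(ℝ³; ℝ³)`,
`|∫ [∇^m, f·∇]g · ∇^m k dx| ≤ C (‖∇^m f‖² + ‖∇^m g‖² + ‖∇^m k‖²)(‖∇f‖_∞ + ‖∇g‖_∞)`. -/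
theorem commutator_triple_product_estimate (m : ℕ) (hm : 2 ≤ m) :
    ∃ C : ℝ, 0 < C ∧
      ∀ f g k : E3 → E3,
        ContDiff ℝ (⊤ : ℕ∞) f → HasCompactSupport f →
        ContDiff ℝ (⊤ : ℕ∞) g → HasCompactSupport g →
        ContDiff ℝ (⊤ : ℕ∞) k → HasCompactSupport k →
        |∫ x : E3, contract m (commGrad m f g x) (iteratedFDeriv ℝ m k x)|
          ≤ C * ((eLpNorm (iteratedFDeriv ℝ m f) 2 volume).toReal ^ 2
                  + (eLpNorm (iteratedFDeriv ℝ m g) 2 volume).toReal ^ 2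
                  + (eLpNorm (iteratedFDeriv ℝ m k) 2 volume).toReal ^ 2)
              * ((eLpNorm (fun x => fderiv ℝ f x) ∞ volume).toReal
                  + (eLpNorm (fun x => fderiv ℝ g x) ∞ volume).toReal) := by
  obtain ⟨n, rfl⟩ : ∃ n, m = n + 1 := ⟨m - 1, by lia⟩
  have hn : n ≠ 0 := by lia
  obtain ⟨C, hC, hcomm⟩ := exists_norm_iteratedFDeriv_commGrad_le (n + 1) 0
  choose! K hK htriple using fun (j : ℕ) (hj : j ≤ n) =>
    exists_integral_triple_le E3 E3 hn volume hj
  have hK0 : 0 ≤ ∑ j ∈ Finset.range (n + 1), K j :=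
    Finset.sum_nonneg fun j hj => hK j (Finset.mem_range_succ_iff.1 hj)
  refine ⟨3 ^ (n + 1) * C * ∑ j ∈ Finset.range (n + 1), K j + 1, by positivity,
    fun f g k hf hfs hg hgs hk hks => ?_⟩
  have hL2 : ∀ u : E3 → E3, ContDiff ℝ (⊤ : ℕ∞) u → HasCompactSupport u →
      (eLpNorm (iteratedFDeriv ℝ (n + 1) u) 2 volume).toReal ^ 2
        = ∫ x, ‖iteratedFDeriv ℝ (n + 1) u x‖ ^ 2 := fun u hu hus =>
    toReal_eLpNorm_two_sq (contDiff_iteratedFDeriv hu _).continuous (hus.iteratedFDeriv _)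
  rw [hL2 f hf hfs, hL2 g hg hgs, hL2 k hk hks]
  set S := (∫ x, ‖iteratedFDeriv ℝ (n + 1) f x‖ ^ 2) + (∫ x, ‖iteratedFDeriv ℝ (n + 1) g x‖ ^ 2)
    + (∫ x, ‖iteratedFDeriv ℝ (n + 1) k x‖ ^ 2) with hS
  have hS0 : 0 ≤ S := by
    have : ∀ u : E3 → E3, 0 ≤ ∫ x, ‖iteratedFDeriv ℝ (n + 1) u x‖ ^ 2 := fun u =>
      integral_nonneg fun x => by positivity
    linarith [this f, this g, this k]
  set a := (eLpNorm (fun x => fderiv ℝ f x) ∞ volume).toReal with ha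
  set b := (eLpNorm (fun x => fderiv ℝ g x) ∞ volume).toReal with hb
  have ha0 : 0 ≤ a := ENNReal.toReal_nonneg
  have hb0 : 0 ≤ b := ENNReal.toReal_nonneg
  have hfa : ∀ x, ‖fderiv ℝ f x‖ ≤ a := norm_le_toReal_eLpNorm_top
    (hf.continuous_fderiv (by simp)) (hfs.fderiv ℝ)
  have hgb : ∀ x, ‖fderiv ℝ g x‖ ≤ b := norm_le_toReal_eLpNorm_top
    (hg.continuous_fderiv (by simp)) (hgs.fderiv ℝ)
  have hi : ∀ j, Integrable fun x => ‖iteratedFDeriv ℝ (j + 1) f x‖ *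
      ‖iteratedFDeriv ℝ (n - j + 1) g x‖ * ‖iteratedFDeriv ℝ (n + 1) k x‖ := fun j =>
    integrable_norm_iteratedFDeriv_mul _ _ _ volume hf hg hk hks
  have hpt : ∀ x, ‖contract (n + 1) (commGrad (n + 1) f g x) (iteratedFDeriv ℝ (n + 1) k x)‖
      ≤ 3 ^ (n + 1) * C * ∑ j ∈ Finset.range (n + 1), ‖iteratedFDeriv ℝ (j + 1) f x‖ *
      ‖iteratedFDeriv ℝ (n - j + 1) g x‖ * ‖iteratedFDeriv ℝ (n + 1) k x‖ := fun x => by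
    have h := hcomm f g hf hg x
    rw [norm_iteratedFDeriv_zero, add_zero] at h
    have hidx : ∑ j ∈ Finset.range (n + 1), ‖iteratedFDeriv ℝ (j + 1) f x‖ *
        ‖iteratedFDeriv ℝ (n + 1 - j) g x‖ = ∑ j ∈ Finset.range (n + 1),
        ‖iteratedFDeriv ℝ (j + 1) f x‖ * ‖iteratedFDeriv ℝ (n - j + 1) g x‖ :=
      Finset.sum_congr rfl fun j hj => by
        rw [Nat.sub_add_comm (Finset.mem_range_succ_iff.1 hj)]
    rw [hidx] at h
    refine (abs_contract_le _ _ _).trans ?_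
    rw [← Finset.sum_mul, mul_assoc, ← mul_assoc C]
    gcongr
  have hbound : ∀ M, 0 < M → a ≤ M → b ≤ M →
      |∫ x, contract (n + 1) (commGrad (n + 1) f g x) (iteratedFDeriv ℝ (n + 1) k x)|
        ≤ (3 ^ (n + 1) * C * ∑ j ∈ Finset.range (n + 1), K j) * S * M := fun M hM haM hbM => by
    calc _ ≤ ∫ x, 3 ^ (n + 1) * C * ∑ j ∈ Finset.range (n + 1), ‖iteratedFDeriv ℝ (j + 1) f x‖ *
          ‖iteratedFDeriv ℝ (n - j + 1) g x‖ * ‖iteratedFDeriv ℝ (n + 1) k x‖ :=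
          norm_integral_le_of_norm_le
            ((integrable_finsetSum _ fun j _ => hi j).const_mul _) (.of_forall hpt)
      _ = 3 ^ (n + 1) * C * ∑ j ∈ Finset.range (n + 1), ∫ x, ‖iteratedFDeriv ℝ (j + 1) f x‖ *
          ‖iteratedFDeriv ℝ (n - j + 1) g x‖ * ‖iteratedFDeriv ℝ (n + 1) k x‖ := by
          rw [integral_const_mul, integral_finsetSum _ fun j _ => hi j]
      _ ≤ 3 ^ (n + 1) * C * ∑ j ∈ Finset.range (n + 1), K j * S * M := by
          gcongr with j hj
          exact htriple j (Finset.mem_range_succ_iff.1 hj) f g k hf hfs hg hgs hk hks M hM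
            (fun x => (hfa x).trans haM) (fun x => (hgb x).trans hbM)
      _ = _ := by simp_rw [← Finset.sum_mul]; ring
  have hlim : |∫ x, contract (n + 1) (commGrad (n + 1) f g x) (iteratedFDeriv ℝ (n + 1) k x)|
      ≤ (3 ^ (n + 1) * C * ∑ j ∈ Finset.range (n + 1), K j) * S * (a + b) := by
    have hcont : Continuous fun M : ℝ =>
        (3 ^ (n + 1) * C * ∑ j ∈ Finset.range (n + 1), K j) * S * M := by fun_prop
    refine ge_of_tendsto (x := nhdsWithin (a + b) (Ioi (a + b)))
      ((hcont.tendsto (a + b)).mono_left nhdsWithin_le_nhds) ?_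
    filter_upwards [self_mem_nhdsWithin] with M hM
    have hM : a + b < M := hM
    exact hbound M (by linarith) (by linarith) (by linarith)
  refine hlim.trans ?_
  gcongr
  linarith
end
end

section
/- Let 0 ≤ θ < 2 and q* ∈ [2, 2(3−θ)], and write r = √(x₁²+x₂²) for x = (x₁,x₂,x₃) ∈ ℝ³. Then there exists a positive constant C = C(q*,θ) such that for all f ∈ C₀^∞(ℝ³), ‖ f/r^{θ/q*} ‖_{L^{q*}(ℝ³)} ≤ C ‖f‖_{L²(ℝ³)}^{(3−θ)/q* − 1/2} ‖∇f‖_{L²(ℝ³)}^{3/2 − (3−θ)/q*}. -/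
open MeasureTheory Set ENNReal

noncomputable section

/-- Distance to the `x₃`-axis. -/
def rad (x : E3) : ℝ := Real.sqrt (x 0 ^ 2 + x 1 ^ 2)

/-- The linear map scaling the distance to the `x₃`-axis by `t` and fixing the axis. -/
def axialScale (t : ℝ) : E3 →ₗ[ℝ] E3 :=
  Matrix.toEuclideanLin (Matrix.diagonal ![t, t, 1])

lemma axialScale_apply (t : ℝ) (x : E3) : axialScale t x = !₂[t * x 0, t * x 1, x 2] := by
  ext i
  fin_cases i <;> simp [axialScale, Matrix.toLpLin_apply, Matrix.mulVec_diagonal]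

lemma det_axialScale (t : ℝ) : LinearMap.det (axialScale t) = t ^ 2 := by
  rw [axialScale, LinearMap.det_toLpLin]
  simp [Fin.prod_univ_three, sq]

lemma rad_nonneg (x : E3) : 0 ≤ rad x := Real.sqrt_nonneg _

lemma continuous_rad : Continuous rad := by
  unfold rad
  fun_prop

lemma rad_axialScale {t : ℝ} (ht : 0 ≤ t) (x : E3) : rad (axialScale t x) = t * rad x := by
  rw [axialScale_apply]
  simp only [rad, Fin.isValue, Matrix.cons_val_zero, Matrix.cons_val_one]
  rw [show (t * x 0) ^ 2 + (t * x 1) ^ 2 = t ^ 2 * (x 0 ^ 2 + x 1 ^ 2) by ring,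
    Real.sqrt_mul (sq_nonneg t), Real.sqrt_sq ht]

lemma measurable_ofReal_rad_rpow (a : ℝ) :
    Measurable fun x : E3 => ENNReal.ofReal (rad x ^ a) :=
  (continuous_rad.measurable.pow_const a).ennreal_ofReal

lemma lintegral_comp_axialScale {t : ℝ} (ht : 0 < t) {F : E3 → ℝ≥0∞} (hF : Measurable F) :
    ∫⁻ x, F (axialScale t x) = ENNReal.ofReal (t ^ (-2 : ℝ)) * ∫⁻ x, F x := by
  have hdet : LinearMap.det (axialScale t) ≠ 0 := by
    rw [det_axialScale]; positivity
  rw [← lintegral_map hF (axialScale t).continuous_of_finiteDimensional.measurable,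
    Measure.map_linearMap_addHaar_eq_smul_addHaar _ hdet, lintegral_smul_measure, det_axialScale,
    abs_of_nonneg (by positivity), Real.rpow_neg ht.le, Real.rpow_two, smul_eq_mul]

/-- The fundamental theorem of calculus along the ray issuing from the `x₃`-axis. -/
lemma enorm_le_lintegral_enorm_fderiv_axialScale {g : E3 → ℝ} (hg : ContDiff ℝ 1 g)
    (hgs : HasCompactSupport g) {x : E3} (hx : 0 < rad x) :
    ‖g x‖ₑ ≤ ∫⁻ t in Ioi (1 : ℝ), ‖fderiv ℝ g (axialScale t x)‖ₑ * ENNReal.ofReal (rad x) := by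
  set v : E3 := !₂[x 0, x 1, 0] with hv
  have hnv : ‖v‖ = rad x := by
    rw [EuclideanSpace.norm_eq, rad, Fin.sum_univ_three]
    simp [hv]
  have hv0 : v ≠ 0 := by
    rw [← norm_pos_iff, hnv]; exact hx
  have hline : (fun t : ℝ => axialScale t x) = fun t : ℝ => t • v + !₂[0, 0, x 2] := by
    funext t
    rw [axialScale_apply]
    ext i
    fin_cases i <;> simp [hv]
  have hderiv (t : ℝ) : HasDerivAt (fun t : ℝ => axialScale t x) v t := by
    rw [hline]
    simpa using ((hasDerivAt_id t).smul_const v).add_const (!₂[0, 0, x 2] : E3)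
  have hemb : Topology.IsClosedEmbedding (fun t : ℝ => axialScale t x) := by
    rw [hline]
    exact (Homeomorph.addRight (!₂[0, 0, x 2] : E3)).isClosedEmbedding.comp
      (isClosedEmbedding_smul_left hv0)
  have hcd : ContDiff ℝ 1 (g ∘ fun t : ℝ => axialScale t x) := by
    refine hg.comp ?_
    rw [hline]
    fun_prop
  have hone : axialScale 1 x = x := by
    rw [axialScale_apply]
    ext i
    fin_cases i <;> simp
  have key := HasCompactSupport.integral_Ioi_deriv_eq hcd (hgs.comp_isClosedEmbedding hemb) 1
  calc ‖g x‖ₑ = ‖∫ t in Ioi (1 : ℝ), deriv (g ∘ fun t : ℝ => axialScale t x) t‖ₑ := by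
        rw [key, enorm_neg, Function.comp_apply, hone]
    _ ≤ ∫⁻ t in Ioi (1 : ℝ), ‖deriv (g ∘ fun t : ℝ => axialScale t x) t‖ₑ :=
        enorm_integral_le_lintegral_enorm _
    _ ≤ _ := by
        gcongr with t
        rw [((hg.differentiable one_ne_zero _).hasFDerivAt.comp_hasDerivAt t (hderiv t)).deriv]
        refine (ContinuousLinearMap.le_opENorm _ _).trans_eq ?_
        rw [← hnv, ofReal_norm]

/-- The constant in the axial Hardy inequality `lintegral_enorm_mul_rad_rpow_le`. -/
def axialHardyConst (θ : ℝ) : ℝ≥0∞ := ∫⁻ t in Ioi (1 : ℝ), ENNReal.ofReal (t ^ (θ - 3))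

lemma axialHardyConst_ne_top {θ : ℝ} (hθ : θ < 2) : axialHardyConst θ ≠ ∞ :=
  (integrableOn_Ioi_rpow_of_lt (by linarith) one_pos).setLIntegral_lt_top.ne

/-- Hardy's inequality for the distance to the `x₃`-axis. -/
lemma lintegral_enorm_mul_rad_rpow_le {θ : ℝ} (hθ : 1 ≤ θ) {g : E3 → ℝ}
    (hg : ContDiff ℝ 1 g) (hgs : HasCompactSupport g) :
    ∫⁻ x, ‖g x‖ₑ * ENNReal.ofReal (rad x ^ (-θ)) ≤
      axialHardyConst θ * ∫⁻ x, ‖fderiv ℝ g x‖ₑ * ENNReal.ofReal (rad x ^ (1 - θ)) := by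
  set F : E3 → ℝ≥0∞ := fun x => ‖fderiv ℝ g x‖ₑ * ENNReal.ofReal (rad x ^ (1 - θ)) with hF
  have hcont : Continuous (fderiv ℝ g) := hg.continuous_fderiv one_ne_zero
  have hFm : Measurable F := hcont.enorm.measurable.mul (measurable_ofReal_rad_rpow _)
  have hjoint : Continuous fun p : E3 × ℝ => axialScale p.2 p.1 := by
    simp only [axialScale_apply]
    fun_prop
  have hpt (x : E3) : ‖g x‖ₑ * ENNReal.ofReal (rad x ^ (-θ)) ≤
      ∫⁻ t in Ioi (1 : ℝ), ENNReal.ofReal (t ^ (θ - 1)) * F (axialScale t x) := by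
    rcases (rad_nonneg x).eq_or_lt with h0 | hx
    · simp [← h0, Real.zero_rpow (show -θ ≠ 0 by linarith)]
    grw [enorm_le_lintegral_enorm_fderiv_axialScale hg hgs hx]
    rw [← lintegral_mul_const' _ _ ENNReal.ofReal_ne_top]
    refine setLIntegral_mono' measurableSet_Ioi fun t ht => le_of_eq ?_
    have ht0 : 0 < t := one_pos.trans ht
    rw [hF]
    simp only [rad_axialScale ht0.le]
    rw [mul_left_comm, mul_assoc, ← ENNReal.ofReal_mul hx.le,
      ← ENNReal.ofReal_mul (by positivity), Real.mul_rpow ht0.le hx.le, ← mul_assoc,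
      ← Real.rpow_add ht0, show θ - 1 + (1 - θ) = 0 by ring, Real.rpow_zero, one_mul,
      sub_eq_add_neg, Real.rpow_add hx, Real.rpow_one]
  calc ∫⁻ x, ‖g x‖ₑ * ENNReal.ofReal (rad x ^ (-θ))
      ≤ ∫⁻ x, ∫⁻ t in Ioi (1 : ℝ), ENNReal.ofReal (t ^ (θ - 1)) * F (axialScale t x) :=
        lintegral_mono hpt
    _ = ∫⁻ t in Ioi (1 : ℝ), ∫⁻ x, ENNReal.ofReal (t ^ (θ - 1)) * F (axialScale t x) := by
        refine lintegral_lintegral_swap (Measurable.aemeasurable ?_)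
        exact ((measurable_snd.pow_const _).ennreal_ofReal).mul (hFm.comp hjoint.measurable)
    _ = ∫⁻ t in Ioi (1 : ℝ), ENNReal.ofReal (t ^ (θ - 3)) * ∫⁻ x, F x := by
        refine setLIntegral_congr_fun measurableSet_Ioi fun t ht => ?_
        have ht0 : 0 < t := one_pos.trans ht
        rw [lintegral_const_mul' _ _ ENNReal.ofReal_ne_top, lintegral_comp_axialScale ht0 hFm,
          ← mul_assoc, ← ENNReal.ofReal_mul (by positivity), ← Real.rpow_add ht0]
        congr 3
        ring
    _ = axialHardyConst θ * ∫⁻ x, F x := by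
        rw [lintegral_mul_const _ (by fun_prop), axialHardyConst]

/-- The axial Sobolev–Hardy inequality with weight exponent `θ` and Lebesgue exponent `q`,
in integrated form. -/
def AxialSobolevHardy (θ q : ℝ) : Prop :=
  ∃ C : ℝ≥0∞, C ≠ ∞ ∧ ∀ f : E3 → ℝ, ContDiff ℝ 1 f → HasCompactSupport f →
    ∫⁻ x, ‖f x‖ₑ ^ q * ENNReal.ofReal (rad x ^ (-θ)) ≤
      C * eLpNorm f 2 volume ^ (3 - θ - q / 2) *
        eLpNorm (fderiv ℝ f) 2 volume ^ (3 * q / 2 - (3 - θ))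

lemma lintegral_enorm_rpow_eq_eLpNorm_rpow {F : Type*} [NormedAddCommGroup F] {f : E3 → F} {p : ℝ}
    (hp : 0 < p) : ∫⁻ x, ‖f x‖ₑ ^ p = eLpNorm f (ENNReal.ofReal p) volume ^ p := by
  rw [eLpNorm_eq_lintegral_rpow_enorm_toReal (by simpa using hp) ENNReal.ofReal_ne_top,
    ENNReal.toReal_ofReal hp.le, ← ENNReal.rpow_mul, one_div, inv_mul_cancel₀ hp.ne',
    ENNReal.rpow_one]

/-- The unweighted case: the Gagliardo–Nirenberg–Sobolev inequality interpolated with `L²`. -/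
lemma axialSobolevHardy_zero {q : ℝ} (hq : 2 ≤ q) (hq' : q ≤ 6) : AxialSobolevHardy 0 q := by
  refine ⟨(SNormLESNormFDerivOfEqConst ℝ (volume : Measure E3) (2 : NNReal) : ℝ≥0∞)
    ^ (6 * ((q - 2) / 4)), ENNReal.rpow_ne_top_of_nonneg (by linarith) ENNReal.coe_ne_top, ?_⟩
  intro f hf hfs
  have hsob : eLpNorm f 6 volume ≤ SNormLESNormFDerivOfEqConst ℝ (volume : Measure E3)
      (2 : NNReal) * eLpNorm (fderiv ℝ f) 2 volume := by
    have := eLpNorm_le_eLpNorm_fderiv_of_eq (F := ℝ) (volume : Measure E3) hf hfs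
      (p := 2) (p' := 6) (by norm_num) (by simp) (by simp; norm_num)
    exact_mod_cast this
  have hfm : Measurable fun x => ‖f x‖ₑ := hf.continuous.enorm.measurable
  have h2 : ∫⁻ x, ‖f x‖ₑ ^ (2 : ℝ) = eLpNorm f 2 volume ^ (2 : ℝ) := by
    simpa using lintegral_enorm_rpow_eq_eLpNorm_rpow (f := f) (p := 2) (by norm_num)
  have h6 : ∫⁻ x, ‖f x‖ₑ ^ (6 : ℝ) = eLpNorm f 6 volume ^ (6 : ℝ) := by
    simpa using lintegral_enorm_rpow_eq_eLpNorm_rpow (f := f) (p := 6) (by norm_num)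
  calc ∫⁻ x, ‖f x‖ₑ ^ q * ENNReal.ofReal (rad x ^ (-0 : ℝ))
      = ∫⁻ x, (‖f x‖ₑ ^ (2 : ℝ)) ^ ((6 - q) / 4) * (‖f x‖ₑ ^ (6 : ℝ)) ^ ((q - 2) / 4) := by
        refine lintegral_congr fun x => ?_
        rw [← ENNReal.rpow_mul, ← ENNReal.rpow_mul,
          ← ENNReal.rpow_add_of_nonneg _ _ (by linarith) (by linarith)]
        simp only [neg_zero, Real.rpow_zero, ENNReal.ofReal_one, mul_one]
        congr 1
        ring
    _ ≤ (∫⁻ x, ‖f x‖ₑ ^ (2 : ℝ)) ^ ((6 - q) / 4) * (∫⁻ x, ‖f x‖ₑ ^ (6 : ℝ)) ^ ((q - 2) / 4) :=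
        ENNReal.lintegral_mul_norm_pow_le (hfm.pow_const _).aemeasurable
          (hfm.pow_const _).aemeasurable (by linarith) (by linarith) (by ring)
    _ ≤ _ := by
        rw [h2, h6, ← ENNReal.rpow_mul, ← ENNReal.rpow_mul]
        have h := ENNReal.rpow_le_rpow hsob (show 0 ≤ 6 * ((q - 2) / 4) by linarith)
        rw [ENNReal.mul_rpow_of_nonneg _ _ (by linarith)] at h
        grw [h]
        rw [mul_left_comm, ← mul_assoc]
        refine le_of_eq ?_
        congr 2 <;> ring_nf

/-- Hardy's inequality in the distance to the axis followed by Cauchy–Schwarz. -/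
lemma AxialSobolevHardy.of_double {θ q : ℝ} (hθ : 1 ≤ θ) (hθ2 : θ < 2) (hq : 2 ≤ q)
    (h : AxialSobolevHardy (2 * (θ - 1)) (2 * (q - 1))) :
    AxialSobolevHardy θ q := by
  obtain ⟨C, hC, hbound⟩ := h
  refine ⟨axialHardyConst θ * ENNReal.ofReal q * C ^ (1 / 2 : ℝ),
    ENNReal.mul_ne_top (ENNReal.mul_ne_top (axialHardyConst_ne_top hθ2) ENNReal.ofReal_ne_top)
      (ENNReal.rpow_ne_top_of_nonneg (by norm_num) hC), ?_⟩
  intro f hf hfs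
  have hq0 : 0 ≤ q := by linarith
  have hfm : Measurable fun x => ‖f x‖ₑ := hf.continuous.enorm.measurable
  have hdm : Measurable fun x => ‖fderiv ℝ f x‖ₑ :=
    (hf.continuous_fderiv one_ne_zero).enorm.measurable
  have hg : ContDiff ℝ 1 fun x => ‖f x‖ ^ q := (contDiff_norm_rpow (by linarith)).comp hf
  have hgs : HasCompactSupport fun x => ‖f x‖ ^ q :=
    hfs.comp_left (g := fun y : ℝ => ‖y‖ ^ q) (by simp [Real.zero_rpow (show q ≠ 0 by linarith)])
  have hgrad (x : E3) : ‖fderiv ℝ (fun x => ‖f x‖ ^ q) x‖ₑ ≤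
      ENNReal.ofReal q * ‖f x‖ₑ ^ (q - 1) * ‖fderiv ℝ f x‖ₑ := by
    simpa [Real.coe_toNNReal q hq0, ENNReal.ofReal] using
      enorm_fderiv_norm_rpow_le (hf.differentiable one_ne_zero) (p := q.toNNReal) (by simp; linarith)
  have h2 : ∫⁻ x, ‖fderiv ℝ f x‖ₑ ^ (2 : ℝ) = eLpNorm (fderiv ℝ f) 2 volume ^ (2 : ℝ) := by
    simpa using lintegral_enorm_rpow_eq_eLpNorm_rpow (f := fderiv ℝ f) (p := 2) (by norm_num)
  calc ∫⁻ x, ‖f x‖ₑ ^ q * ENNReal.ofReal (rad x ^ (-θ))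
      = ∫⁻ x, ‖‖f x‖ ^ q‖ₑ * ENNReal.ofReal (rad x ^ (-θ)) := by
        refine lintegral_congr fun x => ?_
        rw [Real.enorm_rpow_of_nonneg (norm_nonneg _) hq0, enorm_norm]
    _ ≤ axialHardyConst θ *
        ∫⁻ x, ‖fderiv ℝ (fun x => ‖f x‖ ^ q) x‖ₑ * ENNReal.ofReal (rad x ^ (1 - θ)) :=
        lintegral_enorm_mul_rad_rpow_le hθ hg hgs
    _ ≤ axialHardyConst θ * ∫⁻ x, ENNReal.ofReal q * ((‖fderiv ℝ f x‖ₑ ^ (2 : ℝ)) ^ (1 / 2 : ℝ) *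
        (‖f x‖ₑ ^ (2 * (q - 1)) *
          ENNReal.ofReal (rad x ^ (-(2 * (θ - 1))))) ^ (1 / 2 : ℝ)) := by
        refine mul_le_mul_right (lintegral_mono fun x => ?_) _
        grw [hgrad x]
        rw [ENNReal.mul_rpow_of_nonneg _ _ (by norm_num : (0 : ℝ) ≤ 1 / 2), ← ENNReal.rpow_mul,
          ← ENNReal.rpow_mul, ENNReal.ofReal_rpow_of_nonneg (Real.rpow_nonneg (rad_nonneg x) _)
            (by norm_num), ← Real.rpow_mul (rad_nonneg x)]
        refine le_of_eq ?_
        rw [show 2 * (q - 1) * (1 / 2) = q - 1 by ring, show (2 : ℝ) * (1 / 2) = 1 by norm_num,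
          show -(2 * (θ - 1)) * (1 / 2) = 1 - θ by ring, ENNReal.rpow_one]
        ring
    _ ≤ axialHardyConst θ * (ENNReal.ofReal q * ((∫⁻ x, ‖fderiv ℝ f x‖ₑ ^ (2 : ℝ)) ^ (1 / 2 : ℝ) *
        (∫⁻ x, ‖f x‖ₑ ^ (2 * (q - 1)) *
          ENNReal.ofReal (rad x ^ (-(2 * (θ - 1))))) ^ (1 / 2 : ℝ))) := by
        rw [lintegral_const_mul' _ _ ENNReal.ofReal_ne_top]
        gcongr
        exact ENNReal.lintegral_mul_norm_pow_le (hdm.pow_const _).aemeasurable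
          ((hfm.pow_const _).mul (measurable_ofReal_rad_rpow _)).aemeasurable
          (by norm_num) (by norm_num) (by norm_num)
    _ ≤ _ := by
        grw [hbound f hf hfs]
        rw [h2, ← ENNReal.rpow_mul, ENNReal.mul_rpow_of_nonneg _ _ (by norm_num : (0 : ℝ) ≤ 1 / 2),
          ENNReal.mul_rpow_of_nonneg _ _ (by norm_num : (0 : ℝ) ≤ 1 / 2), ← ENNReal.rpow_mul,
          ← ENNReal.rpow_mul,
          show (3 - 2 * (θ - 1) - 2 * (q - 1) / 2) * (1 / 2) = 3 - θ - q / 2 by ring,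
          show 3 * q / 2 - (3 - θ) =
            2 * (1 / 2) + (3 * (2 * (q - 1)) / 2 - (3 - 2 * (θ - 1))) * (1 / 2) by ring,
          ENNReal.rpow_add_of_nonneg _ _ (by norm_num) (by linarith)]
        refine le_of_eq ?_
        ring

/-- For `θ ≤ 1`, interpolate between the weight exponents `0` and `1`. -/
lemma axialSobolevHardy_of_le_one {θ q : ℝ} (hθ : 0 ≤ θ) (hθ1 : θ ≤ 1) (hq : 2 ≤ q)
    (hq' : q ≤ 2 * (3 - θ)) : AxialSobolevHardy θ q := by
  obtain ⟨s, hs0, hs1, rfl⟩ : ∃ s : ℝ, 0 ≤ s ∧ s ≤ 1 ∧ q = 2 + s * (4 - 2 * θ) := by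
    have h4 : 0 < 4 - 2 * θ := by linarith
    refine ⟨(q - 2) / (4 - 2 * θ), div_nonneg (by linarith) h4.le, ?_, ?_⟩
    · rw [div_le_one h4]; linarith
    · rw [div_mul_cancel₀ _ h4.ne']; ring
  obtain ⟨C₀, hC₀, h₀⟩ := axialSobolevHardy_zero (q := 2 + 4 * s) (by linarith) (by linarith)
  obtain ⟨C₁, hC₁, h₁⟩ := AxialSobolevHardy.of_double (θ := 1) (q := 2 + 2 * s) le_rfl
    (by norm_num) (by linarith)
    (by
      rw [sub_self, mul_zero]
      exact axialSobolevHardy_zero (by linarith) (by linarith))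
  have hθ' : 0 ≤ 1 - θ := by linarith
  refine ⟨C₀ ^ (1 - θ) * C₁ ^ θ, ENNReal.mul_ne_top (ENNReal.rpow_ne_top_of_nonneg hθ' hC₀)
    (ENNReal.rpow_ne_top_of_nonneg hθ hC₁), ?_⟩
  intro f hf hfs
  have hfm : Measurable fun x => ‖f x‖ₑ := hf.continuous.enorm.measurable
  calc ∫⁻ x, ‖f x‖ₑ ^ (2 + s * (4 - 2 * θ)) * ENNReal.ofReal (rad x ^ (-θ))
      = ∫⁻ x, (‖f x‖ₑ ^ (2 + 4 * s) * ENNReal.ofReal (rad x ^ (-0 : ℝ))) ^ (1 - θ) *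
          (‖f x‖ₑ ^ (2 + 2 * s) * ENNReal.ofReal (rad x ^ (-1 : ℝ))) ^ θ := by
        refine lintegral_congr fun x => ?_
        rw [ENNReal.mul_rpow_of_nonneg _ _ hθ, neg_zero, Real.rpow_zero, ENNReal.ofReal_one,
          mul_one, ENNReal.ofReal_rpow_of_nonneg (Real.rpow_nonneg (rad_nonneg x) _) hθ,
          ← Real.rpow_mul (rad_nonneg x), ← mul_assoc, ← ENNReal.rpow_mul, ← ENNReal.rpow_mul,
          ← ENNReal.rpow_add_of_nonneg _ _ (by positivity) (by positivity), neg_one_mul]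
        congr 2
        ring
    _ ≤ (∫⁻ x, ‖f x‖ₑ ^ (2 + 4 * s) * ENNReal.ofReal (rad x ^ (-0 : ℝ))) ^ (1 - θ) *
          (∫⁻ x, ‖f x‖ₑ ^ (2 + 2 * s) * ENNReal.ofReal (rad x ^ (-1 : ℝ))) ^ θ :=
        ENNReal.lintegral_mul_norm_pow_le
          ((hfm.pow_const _).mul (measurable_ofReal_rad_rpow _)).aemeasurable
          ((hfm.pow_const _).mul (measurable_ofReal_rad_rpow _)).aemeasurable hθ' hθ (by ring)
    _ ≤ _ := by
        grw [h₀ f hf hfs, h₁ f hf hfs]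
        simp only [ENNReal.mul_rpow_of_nonneg _ _ hθ, ENNReal.mul_rpow_of_nonneg _ _ hθ',
          ← ENNReal.rpow_mul]
        rw [show 3 - θ - (2 + s * (4 - 2 * θ)) / 2 =
            (3 - 0 - (2 + 4 * s) / 2) * (1 - θ) + (3 - 1 - (2 + 2 * s) / 2) * θ by ring,
          show 3 * (2 + s * (4 - 2 * θ)) / 2 - (3 - θ) =
            (3 * (2 + 4 * s) / 2 - (3 - 0)) * (1 - θ) +
              (3 * (2 + 2 * s) / 2 - (3 - 1)) * θ by ring,
          ENNReal.rpow_add_of_nonneg _ _ (mul_nonneg (by linarith) hθ')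
            (mul_nonneg (by linarith) hθ),
          ENNReal.rpow_add_of_nonneg _ _ (mul_nonneg (by linarith) hθ')
            (mul_nonneg (by linarith) hθ)]
        refine le_of_eq ?_
        ring

lemma axialSobolevHardy_of_one_le_two_pow_mul (n : ℕ) {θ q : ℝ} (hθ : 0 ≤ θ) (hq : 2 ≤ q)
    (hq' : q ≤ 2 * (3 - θ)) (hn : 1 ≤ 2 ^ n * (2 - θ)) : AxialSobolevHardy θ q := by
  induction n generalizing θ q with
  | zero => exact axialSobolevHardy_of_le_one hθ (by linarith) hq hq'
  | succ n ih =>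
    rcases le_total θ 1 with h1 | h1
    · exact axialSobolevHardy_of_le_one hθ h1 hq hq'
    · have hθ2 : θ < 2 := by
        by_contra! h
        have : (2 : ℝ) ^ (n + 1) * (2 - θ) ≤ 0 :=
          mul_nonpos_of_nonneg_of_nonpos (by positivity) (by linarith)
        linarith
      refine .of_double h1 hθ2 hq (ih (by linarith) (by linarith) (by linarith) ?_)
      rw [pow_succ] at hn
      linarith

lemma axialSobolevHardy {θ q : ℝ} (hθ : 0 ≤ θ) (hθ2 : θ < 2) (hq : 2 ≤ q)
    (hq' : q ≤ 2 * (3 - θ)) : AxialSobolevHardy θ q := by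
  have h2 : 0 < 2 - θ := by linarith
  obtain ⟨n, hn⟩ := pow_unbounded_of_one_lt (1 / (2 - θ)) one_lt_two
  refine axialSobolevHardy_of_one_le_two_pow_mul n hθ hq hq' ?_
  rw [div_lt_iff₀ h2] at hn
  exact hn.le

/-- Sobolev–Hardy inequality in `ℝ³` with the axial weight
`r = √(x₁² + x₂²)`: for `0 ≤ θ < 2` and `q* ∈ [2, 2(3−θ)]` there is
`C = C(q*,θ) > 0` such that for all `f ∈ C₀^∞(ℝ³)`,
`‖ f/r^{θ/q*} ‖_{L^{q*}} ≤ C ‖f‖_{L²}^{(3−θ)/q* − 1/2} ‖∇f‖_{L²}^{3/2 − (3−θ)/q*}`. -/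
theorem sobolev_hardy_axial
    (θ qs : ℝ) (hθ0 : 0 ≤ θ) (hθ2 : θ < 2)
    (hqs1 : 2 ≤ qs) (hqs2 : qs ≤ 2 * (3 - θ)) :
    ∃ C : ℝ, 0 < C ∧
      ∀ f : E3 → ℝ,
        ContDiff ℝ (⊤ : ℕ∞) f → HasCompactSupport f →
        eLpNorm (fun x => f x / (rad x) ^ (θ / qs)) (ENNReal.ofReal qs) volume
          ≤ ENNReal.ofReal C
            * (eLpNorm f 2 volume) ^ ((3 - θ) / qs - 1 / 2)
            * (eLpNorm (fun x => fderiv ℝ f x) 2 volume) ^ (3 / 2 - (3 - θ) / qs) := by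
  have hq0 : 0 < qs := by linarith
  obtain ⟨C, hC, hbound⟩ := axialSobolevHardy hθ0 hθ2 hqs1 hqs2
  have hC' : C ^ (1 / qs) ≠ ∞ := ENNReal.rpow_ne_top_of_nonneg (by positivity) hC
  refine ⟨(C ^ (1 / qs)).toReal + 1, by positivity, fun f hf hfs => ?_⟩
  have hweight (x : E3) : ‖f x / rad x ^ (θ / qs)‖ₑ ^ qs =
      ‖f x‖ₑ ^ qs * ENNReal.ofReal (rad x ^ (-θ)) := by
    have hr := rad_nonneg x
    rw [div_eq_mul_inv, enorm_mul, ENNReal.mul_rpow_of_nonneg _ _ hq0.le, ← Real.rpow_neg hr,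
      Real.enorm_of_nonneg (Real.rpow_nonneg hr _),
      ENNReal.ofReal_rpow_of_nonneg (Real.rpow_nonneg hr _) hq0.le, ← Real.rpow_mul hr, neg_mul,
      div_mul_cancel₀ _ hq0.ne']
  rw [eLpNorm_eq_lintegral_rpow_enorm_toReal (by simpa using hq0) ENNReal.ofReal_ne_top,
    ENNReal.toReal_ofReal hq0.le]
  simp only [hweight]
  grw [hbound f (hf.of_le (mod_cast le_top)) hfs]
  rw [ENNReal.mul_rpow_of_nonneg _ _ (by positivity), ENNReal.mul_rpow_of_nonneg _ _ (by positivity),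
    ← ENNReal.rpow_mul, ← ENNReal.rpow_mul,
    show (3 - θ - qs / 2) * (1 / qs) = (3 - θ) / qs - 1 / 2 by field_simp,
    show (3 * qs / 2 - (3 - θ)) * (1 / qs) = 3 / 2 - (3 - θ) / qs by field_simp]
  gcongr
  rw [← ENNReal.ofReal_toReal hC']
  exact ENNReal.ofReal_le_ofReal (by simp)
end
end
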